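/- arXiv:2012.14362 — 2 statements merged into one kernel-verified Lean document; each statement's English description precedes it below -/
import Mathlib

section
/- Let n ≥ 1 and let ψ : ℝ × ℝⁿ → ℂ be smooth such that for each t the functions ψ(t,·) and ∂ₜψ(t,·) are Schwartz, with Schwartz seminorms locally bounded in t, and ψ satisfies the free Schrödinger equation i∂ₜψ(t,x) = −Δψ(t,x) on ℝ × ℝⁿ. Then the function t ↦ ∫_{ℝⁿ} ‖x ψ(t,x) + 2it ∇ₓψ(t,x)‖²_{ℂⁿ} dx is constant on ℝ. -/
open MeasureTheory Complex

noncomputable section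

/-- Partial derivative in the `i`-th coordinate direction. -/
def pd {n : ℕ} (f : EuclideanSpace ℝ (Fin n) → ℂ) (i : Fin n)
    (x : EuclideanSpace ℝ (Fin n)) : ℂ :=
  fderiv ℝ f x (EuclideanSpace.single i 1)

/-- The Laplacian `Δf = ∑ i ∂²f/∂xᵢ²`. -/
def lap {n : ℕ} (f : EuclideanSpace ℝ (Fin n) → ℂ)
    (x : EuclideanSpace ℝ (Fin n)) : ℂ :=
  ∑ i, pd (fun y => pd f i y) i x

/-- Squared norm of the gradient, `‖∇f(x)‖²_{ℂⁿ} = ∑ i ‖∂ᵢf(x)‖²`. -/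
def gradNormSq {n : ℕ} (f : EuclideanSpace ℝ (Fin n) → ℂ)
    (x : EuclideanSpace ℝ (Fin n)) : ℝ :=
  ∑ i, ‖pd f i x‖ ^ 2

/-- `x·∇V(x) = ∑ i xᵢ ∂V/∂xᵢ(x)` for a real-valued potential `V`. -/
def xdotGrad {n : ℕ} (V : EuclideanSpace ℝ (Fin n) → ℝ)
    (x : EuclideanSpace ℝ (Fin n)) : ℝ :=
  ∑ i, x i * fderiv ℝ V x (EuclideanSpace.single i 1)

/-- Time derivative `∂ₜψ(t,x)`. -/
def tderiv {n : ℕ} (ψ : ℝ → EuclideanSpace ℝ (Fin n) → ℂ) (t : ℝ)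
    (x : EuclideanSpace ℝ (Fin n)) : ℂ :=
  deriv (fun s => ψ s x) t

/-- `ψ(t,·)` is Schwartz for each `t`, with Schwartz seminorms locally bounded
in `t`: on each compact time interval all weighted derivative bounds are uniform. -/
def LocUnifSchwartz {n : ℕ} (ψ : ℝ → EuclideanSpace ℝ (Fin n) → ℂ) : Prop :=
  ∀ (k m : ℕ) (T : ℝ), ∃ C : ℝ, ∀ t ∈ Set.Icc (-T) T,
    ∀ x : EuclideanSpace ℝ (Fin n),
      ‖x‖ ^ k * ‖iteratedFDeriv ℝ m (ψ t) x‖ ≤ C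

/-- The conformal factor `‖(x−2pt)ψ(t)‖² = ∫_{ℝⁿ} ‖xψ(t,x) + 2it∇ₓψ(t,x)‖²_{ℂⁿ} dx`. -/
def conformalFactor {n : ℕ} (ψ : ℝ → EuclideanSpace ℝ (Fin n) → ℂ) (t : ℝ) : ℝ :=
  ∫ x : EuclideanSpace ℝ (Fin n),
    ∑ i, ‖(x i : ℂ) * ψ t x + 2 * Complex.I * (t : ℂ) * pd (ψ t) i x‖ ^ 2


open scoped SchwartzMap LineDeriv

namespace CF

abbrev E (n : ℕ) := EuclideanSpace ℝ (Fin n)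

/-- The standard basis vector. -/
abbrev e {n : ℕ} (i : Fin n) : E n := EuclideanSpace.single i 1

lemma temp {n : ℕ} (i : Fin n) :
    (fun x : E n => ((x i : ℝ) : ℂ)).HasTemperateGrowth := by
  have := (Complex.ofRealCLM.comp (EuclideanSpace.proj i : E n →L[ℝ] ℝ)).hasTemperateGrowth
  exact this

/-- Multiplication by a coordinate. -/
def M {n : ℕ} (i : Fin n) (f : 𝓢(E n, ℂ)) : 𝓢(E n, ℂ) :=
  SchwartzMap.smulLeftCLM ℂ (fun x : E n => ((x i : ℝ) : ℂ)) f

lemma M_apply {n : ℕ} (i : Fin n) (f : 𝓢(E n, ℂ)) (x : E n) :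
    M i f x = (x i : ℂ) * f x := by
  simp [M, temp i]

lemma pd_M {n : ℕ} (i j : Fin n) (f : 𝓢(E n, ℂ)) :
    ∂_{e j} (M i f) = (if i = j then f else 0) + M i (∂_{e j} f) := by
  ext x
  rw [SchwartzMap.lineDerivOp_apply_eq_fderiv]
  have h1 : HasFDerivAt (fun x : E n => ((x i : ℝ) : ℂ))
      (Complex.ofRealCLM.comp (EuclideanSpace.proj i : E n →L[ℝ] ℝ)) x :=
    (Complex.ofRealCLM.comp
      (EuclideanSpace.proj i : E n →L[ℝ] ℝ)).hasFDerivAt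
  have h2 := h1.mul (f.hasFDerivAt x)
  have h3 : (M i f : E n → ℂ) = (fun x : E n => ((x i : ℝ) : ℂ)) * f := by
    ext y; simp [M_apply]
  rw [h3, h2.fderiv]
  change _ = (if i = j then f else 0) x + M i (∂_{e j} f) x
  rw [M_apply, SchwartzMap.lineDerivOp_apply_eq_fderiv]
  by_cases h : i = j
  · subst h; simp; ring
  · simp [h]

lemma pd_comm {n : ℕ} (v w : E n) (f : 𝓢(E n, ℂ)) :
    ∂_{v} (∂_{w} f) = ∂_{w} (∂_{v} f) := by
  ext x
  have hf : ContDiff ℝ 2 f := f.smooth 2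
  have hd : DifferentiableAt ℝ (fderiv ℝ f) x :=
    (hf.fderiv_right (m := 1) (by norm_num)).differentiable (by norm_num) x
  have key : ∀ v w : E n, (∂_{v} (∂_{w} f)) x = fderiv ℝ (fderiv ℝ f) x v w := by
    intro v w
    rw [SchwartzMap.lineDerivOp_apply_eq_fderiv]
    have : ((∂_{w} f : 𝓢(E n, ℂ)) : E n → ℂ) = fun y => fderiv ℝ f y w := rfl
    rw [this, fderiv_clm_apply hd (by fun_prop)]
    simp
  rw [key, key]
  exact (hf.contDiffAt.isSymmSndFDerivAt (by simp)) v w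

/-- Laplacian on Schwartz functions. -/
def Lap {n : ℕ} (f : 𝓢(E n, ℂ)) : 𝓢(E n, ℂ) := ∑ j : Fin n, ∂_{e j} (∂_{e j} f)

/-- The operator `x_i + 2 i t ∂_i`. -/
def U {n : ℕ} (i : Fin n) (t : ℝ) (f : 𝓢(E n, ℂ)) : 𝓢(E n, ℂ) :=
  M i f + (2 * I * (t : ℂ)) • ∂_{e i} f

lemma Lap_U {n : ℕ} (i : Fin n) (t : ℝ) (f : 𝓢(E n, ℂ)) :
    Lap (U i t f) = (2 : ℂ) • ∂_{e i} f + U i t (Lap f) := by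
  have hM : Lap (M i f) = (2 : ℂ) • ∂_{e i} f + M i (Lap f) := by
    have h1 : ∀ j, ∂_{e j} (∂_{e j} (M i f)) =
        (if i = j then (2 : ℂ) • ∂_{e i} f else 0) + M i (∂_{e j} (∂_{e j} f)) := by
      intro j
      rw [pd_M, LineDeriv.lineDerivOp_add, pd_M]
      by_cases h : i = j
      · subst h; simp only [if_true]; rw [two_smul]; abel
      · simp [h, LineDeriv.lineDerivOp_zero]
    simp only [Lap, h1, Finset.sum_add_distrib, Finset.sum_ite_eq, Finset.mem_univ, if_true]
    congr 1
    simp [M]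
  have hD : Lap (∂_{e i} f) = ∂_{e i} (Lap f) := by
    simp only [Lap, LineDeriv.lineDerivOp_sum]
    refine Finset.sum_congr rfl fun j _ => ?_
    rw [pd_comm (e j) (e i) f, pd_comm (e j) (e i)]
  have hlin : ∀ (c : ℂ) (g h : 𝓢(E n, ℂ)), Lap (g + c • h) = Lap g + c • Lap h := by
    intro c g h
    simp [Lap, LineDeriv.lineDerivOp_add, LineDeriv.lineDerivOp_smul, Finset.sum_add_distrib,
      Finset.smul_sum]
  rw [U, hlin, hM, hD, U, add_assoc]

/-- The real bilinear form `⟪a, i b⟫`. -/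
def L : ℂ →L[ℝ] ℂ →L[ℝ] ℝ :=
  (innerSL ℝ).bilinearComp (ContinuousLinearMap.id ℝ ℂ) (ContinuousLinearMap.mul ℝ ℂ I)

lemma L_apply (a b : ℂ) : L a b = inner ℝ a (I * b) := rfl

lemma L_self (a : ℂ) : L a a = 0 := by
  rw [L_apply, Complex.inner]
  simp; ring

lemma int_Lap {n : ℕ} (u : 𝓢(E n, ℂ)) : ∫ x, L (u x) (Lap u x) = 0 := by
  simp only [Lap, _root_.sum_apply, map_sum]
  rw [MeasureTheory.integral_finsetSum]
  · refine Finset.sum_eq_zero fun j _ => ?_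
    rw [SchwartzMap.integral_bilinear_lineDerivOp_right_eq_neg_left]
    simp [L_self]
  · exact fun j _ => (SchwartzMap.pairing L u (∂_{e j} (∂_{e j} u))).integrable

lemma bound {n : ℕ} {g : ℝ → E n → ℂ} (hg : LocUnifSchwartz g) (k m : ℕ) (T : ℝ) :
    ∃ C : ℝ, 0 ≤ C ∧ ∀ t ∈ Set.Icc (-T) T, ∀ x : E n,
      (1 + ‖x‖) ^ k * ‖iteratedFDeriv ℝ m (g t) x‖ ≤ C := by
  obtain ⟨A, hA⟩ := hg 0 m T
  obtain ⟨B, hB⟩ := hg k m T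
  refine ⟨2 ^ (k - 1) * (|A| + |B|), by positivity, fun t ht x => ?_⟩
  have h1 := hA t ht x
  have h2 := hB t ht x
  have h3 : (1 + ‖x‖) ^ k ≤ 2 ^ (k - 1) * (1 ^ k + ‖x‖ ^ k) :=
    add_pow_le zero_le_one (norm_nonneg x) k
  calc _ ≤ (2 ^ (k - 1) * (1 ^ k + ‖x‖ ^ k)) * ‖iteratedFDeriv ℝ m (g t) x‖ := by gcongr
    _ = 2 ^ (k - 1) * (‖x‖ ^ 0 * ‖iteratedFDeriv ℝ m (g t) x‖
        + ‖x‖ ^ k * ‖iteratedFDeriv ℝ m (g t) x‖) := by simp; ring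
    _ ≤ _ := by
      gcongr
      · exact h1.trans (le_abs_self _)
      · exact h2.trans (le_abs_self _)

lemma bound0 {n : ℕ} {g : ℝ → E n → ℂ} (hg : LocUnifSchwartz g) (k : ℕ) (T : ℝ) :
    ∃ C : ℝ, 0 ≤ C ∧ ∀ t ∈ Set.Icc (-T) T, ∀ x : E n, (1 + ‖x‖) ^ k * ‖g t x‖ ≤ C := by
  simpa using bound hg k 0 T

lemma bound1 {n : ℕ} {g : ℝ → E n → ℂ} (hg : LocUnifSchwartz g) (i : Fin n) (k : ℕ) (T : ℝ) :
    ∃ C : ℝ, 0 ≤ C ∧ ∀ t ∈ Set.Icc (-T) T, ∀ x : E n, (1 + ‖x‖) ^ k * ‖pd (g t) i x‖ ≤ C := by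
  obtain ⟨C, hC, h⟩ := bound hg k 1 T
  refine ⟨C, hC, fun t ht x => le_trans ?_ (h t ht x)⟩
  gcongr
  rw [norm_iteratedFDeriv_one]
  simpa [pd] using (fderiv ℝ (g t) x).le_opNorm (e i)

section
variable {n : ℕ} {ψ : ℝ → E n → ℂ}

lemma slice_smooth (hψ : ContDiff ℝ (⊤ : ℕ∞) (fun p : ℝ × E n => ψ p.1 p.2)) (t : ℝ) :
    ContDiff ℝ (⊤ : ℕ∞) (ψ t) :=
  hψ.comp (contDiff_const.prodMk contDiff_id : ContDiff ℝ (⊤ : ℕ∞) (fun x : E n => (t, x)))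

/-- `ψ t` as a Schwartz function. -/
def S (hψ : ContDiff ℝ (⊤ : ℕ∞) (fun p : ℝ × E n => ψ p.1 p.2)) (hS : LocUnifSchwartz ψ)
    (t : ℝ) : 𝓢(E n, ℂ) where
  toFun := ψ t
  smooth' := slice_smooth hψ t
  decay' := fun k m => by
    obtain ⟨C, hC⟩ := hS k m |t|
    exact ⟨C, fun x => hC t ⟨neg_abs_le t, le_abs_self t⟩ x⟩

lemma pd_eq (hψ : ContDiff ℝ (⊤ : ℕ∞) (fun p : ℝ × E n => ψ p.1 p.2)) (t : ℝ) (x : E n)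
    (i : Fin n) :
    pd (ψ t) i x = fderiv ℝ (fun p : ℝ × E n => ψ p.1 p.2) (t, x) (0, e i) := by
  have h := (hψ.differentiable (by simp) (t, x)).hasFDerivAt
  have h2 : HasFDerivAt (fun y : E n => (t, y)) (ContinuousLinearMap.inr ℝ ℝ (E n)) x :=
    hasFDerivAt_prodMk_right t x
  have h3 := h.comp x h2
  have h4 : fderiv ℝ (ψ t) x = _ := h3.fderiv
  rw [pd, h4]; simp

lemma t_has (hψ : ContDiff ℝ (⊤ : ℕ∞) (fun p : ℝ × E n => ψ p.1 p.2)) (t : ℝ) (x : E n) :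
    HasDerivAt (fun s => ψ s x)
      (fderiv ℝ (fun p : ℝ × E n => ψ p.1 p.2) (t, x) (1, 0)) t := by
  have h := (hψ.differentiable (by simp) (t, x)).hasFDerivAt
  have h2 : HasDerivAt (fun s : ℝ => (s, x)) ((1 : ℝ), (0 : E n)) t :=
    (hasDerivAt_id t).prodMk (hasDerivAt_const t x)
  exact h.comp_hasDerivAt t h2

lemma tderiv_has (hψ : ContDiff ℝ (⊤ : ℕ∞) (fun p : ℝ × E n => ψ p.1 p.2)) (t : ℝ) (x : E n) :
    HasDerivAt (fun s => ψ s x) (tderiv ψ t x) t :=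
  (t_has hψ t x).differentiableAt.hasDerivAt

lemma gen1 {Ψ : ℝ × E n → ℂ} (hψ : ContDiff ℝ (⊤ : ℕ∞) Ψ) (t : ℝ) (x : E n) (v : E n) :
    HasDerivAt (fun s : ℝ => fderiv ℝ Ψ (s, x) (0, v))
      (fderiv ℝ (fderiv ℝ Ψ) (t, x) (1, 0) (0, v)) t := by
  have hd : DifferentiableAt ℝ (fderiv ℝ Ψ) (t, x) :=
    (hψ.fderiv_right (m := 1) (by norm_cast)).differentiable (by norm_num) _
  have h2 : HasDerivAt (fun s : ℝ => (s, x)) ((1 : ℝ), (0 : E n)) t :=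
    (hasDerivAt_id t).prodMk (hasDerivAt_const t x)
  have h3 : HasDerivAt (fun s : ℝ => fderiv ℝ Ψ (s, x))
    (fderiv ℝ (fderiv ℝ Ψ) (t, x) (1, 0)) t := hd.hasFDerivAt.comp_hasDerivAt t h2
  have h4 := h3.clm_apply (hasDerivAt_const t ((0 : ℝ), v))
  refine h4.congr_deriv ?_
  rw [map_zero, add_zero]

lemma gen2 {Ψ : ℝ × E n → ℂ} (hψ : ContDiff ℝ (⊤ : ℕ∞) Ψ) (t : ℝ) (x : E n) (v : E n) :
    fderiv ℝ (fun y : E n => fderiv ℝ Ψ (t, y) (1, 0)) x v =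
      fderiv ℝ (fderiv ℝ Ψ) (t, x) (0, v) (1, 0) := by
  have hd : DifferentiableAt ℝ (fderiv ℝ Ψ) (t, x) :=
    (hψ.fderiv_right (m := 1) (by norm_cast)).differentiable (by norm_num) _
  have h4 : HasFDerivAt (fun y : E n => (t, y)) (ContinuousLinearMap.inr ℝ ℝ (E n)) x :=
    hasFDerivAt_prodMk_right t x
  have h5 : HasFDerivAt (fun y : E n => fderiv ℝ Ψ (t, y))
    ((fderiv ℝ (fderiv ℝ Ψ) (t, x)).comp (ContinuousLinearMap.inr ℝ ℝ (E n))) x :=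
    hd.hasFDerivAt.comp x h4
  rw [fderiv_clm_apply h5.differentiableAt (by fun_prop), h5.fderiv]
  simp

lemma gen3 {Ψ : ℝ × E n → ℂ} (hψ : ContDiff ℝ (⊤ : ℕ∞) Ψ) (p v w : ℝ × E n) :
    fderiv ℝ (fderiv ℝ Ψ) p v w = fderiv ℝ (fderiv ℝ Ψ) p w v := by
  have h2 : ContDiffAt ℝ 2 Ψ p := (hψ.of_le (by norm_cast)).contDiffAt
  exact h2.isSymmSndFDerivAt (by simp) v w

lemma pd_has (hψ : ContDiff ℝ (⊤ : ℕ∞) (fun p : ℝ × E n => ψ p.1 p.2)) (t : ℝ) (x : E n)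
    (i : Fin n) :
    HasDerivAt (fun s => pd (ψ s) i x) (pd (tderiv ψ t) i x) t := by
  have e1 : (fun s => pd (ψ s) i x) =
      fun s => fderiv ℝ (fun p : ℝ × E n => ψ p.1 p.2) (s, x) (0, e i) := by
    ext s; exact pd_eq hψ s x i
  have e2 : tderiv ψ t = fun y => fderiv ℝ (fun p : ℝ × E n => ψ p.1 p.2) (t, y) (1, 0) := by
    ext y; exact (t_has hψ t y).deriv
  rw [e1, pd, e2, gen2 hψ, gen3 hψ]
  exact gen1 hψ t x (e i)

lemma U_apply (hψ : ContDiff ℝ (⊤ : ℕ∞) (fun p : ℝ × E n => ψ p.1 p.2))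
    (hS : LocUnifSchwartz ψ) (i : Fin n) (t : ℝ) (x : E n) :
    U i t (S hψ hS t) x = (x i : ℂ) * ψ t x + 2 * I * (t : ℂ) * pd (ψ t) i x := by
  rw [U, _root_.add_apply, M_apply, _root_.smul_apply, smul_eq_mul]
  rfl

lemma tderiv_eq (hψ : ContDiff ℝ (⊤ : ℕ∞) (fun p : ℝ × E n => ψ p.1 p.2))
    (hS : LocUnifSchwartz ψ) (heq : ∀ t x, Complex.I * tderiv ψ t x = -lap (ψ t) x) (t : ℝ) :
    tderiv ψ t = (I • Lap (S hψ hS t) : 𝓢(E n, ℂ)) := by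
  ext x
  have h1 : Lap (S hψ hS t) x = lap (ψ t) x := by
    simp only [Lap, _root_.sum_apply, lap]; rfl
  rw [_root_.smul_apply, h1, smul_eq_mul]
  have := heq t x
  linear_combination (-I) * this + (tderiv ψ t x) * I_sq

/-- The time derivative of `x_i ψ + 2 i t ∂_i ψ`. -/
def W (ψ : ℝ → E n → ℂ) (i : Fin n) (t : ℝ) (x : E n) : ℂ :=
  (x i : ℂ) * tderiv ψ t x + (2 * I * pd (ψ t) i x + 2 * I * (t : ℂ) * pd (tderiv ψ t) i x)

lemma W_eq (hψ : ContDiff ℝ (⊤ : ℕ∞) (fun p : ℝ × E n => ψ p.1 p.2))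
    (hS : LocUnifSchwartz ψ) (heq : ∀ t x, Complex.I * tderiv ψ t x = -lap (ψ t) x)
    (i : Fin n) (t : ℝ) (x : E n) :
    W ψ i t x = I * Lap (U i t (S hψ hS t)) x := by
  have h := tderiv_eq hψ hS heq t
  have h2 : pd (tderiv ψ t) i x = I * (∂_{e i} (Lap (S hψ hS t))) x := by
    rw [h]
    change (∂_{e i} (I • Lap (S hψ hS t))) x = _
    rw [LineDeriv.lineDerivOp_smul]; rfl
  have h3 : pd (ψ t) i x = (∂_{e i} (S hψ hS t)) x := rfl
  rw [Lap_U, W, h2, h, h3, U]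
  simp only [_root_.add_apply, _root_.smul_apply, M_apply, smul_eq_mul]
  ring

lemma u_has (hψ : ContDiff ℝ (⊤ : ℕ∞) (fun p : ℝ × E n => ψ p.1 p.2)) (i : Fin n)
    (t : ℝ) (x : E n) :
    HasDerivAt (fun s : ℝ => (x i : ℂ) * ψ s x + 2 * I * (s : ℂ) * pd (ψ s) i x)
      (W ψ i t x) t := by
  have h1 := (tderiv_has hψ t x).const_mul (x i : ℂ)
  have h2 : HasDerivAt (fun s : ℝ => 2 * I * (s : ℂ)) (2 * I * 1) t :=
    (Complex.ofRealCLM.hasDerivAt (x := t)).const_mul (2 * I)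
  have h3 := h1.add (h2.mul (pd_has hψ t x i))
  rw [mul_one] at h3
  exact h3

lemma main (hψ : ContDiff ℝ (⊤ : ℕ∞) (fun p : ℝ × E n => ψ p.1 p.2))
    (hS : LocUnifSchwartz ψ) (hS' : LocUnifSchwartz (fun t => tderiv ψ t))
    (heq : ∀ t x, Complex.I * tderiv ψ t x = -lap (ψ t) x) (i : Fin n) (t₀ : ℝ) :
    HasDerivAt (fun t : ℝ => ∫ x : E n,
      ‖(x i : ℂ) * ψ t x + 2 * I * (t : ℂ) * pd (ψ t) i x‖ ^ 2) 0 t₀ := by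
  set T : ℝ := |t₀| + 1 with hT
  have hT0 : 0 ≤ T := by positivity
  obtain ⟨A, hA0, hA⟩ := bound0 hS 1 T
  obtain ⟨B, hB0, hB⟩ := bound1 hS i 0 T
  obtain ⟨C, hC0, hC⟩ := bound0 hS' (n + 2) T
  obtain ⟨D, hD0, hD⟩ := bound1 hS i (n + 1) T
  obtain ⟨F, hF0, hF⟩ := bound1 hS' i (n + 1) T
  have hs : Set.Icc (-T) T ∈ nhds t₀ := by
    apply Icc_mem_nhds
    · have := neg_abs_le t₀; linarith
    · have := le_abs_self t₀; linarith
  have hUeq : ∀ t : ℝ, (fun x : E n => ‖(x i : ℂ) * ψ t x + 2 * I * (t : ℂ) * pd (ψ t) i x‖ ^ 2)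
      = fun x => ‖U i t (S hψ hS t) x‖ ^ 2 := by
    intro t; ext x; rw [U_apply]
  have hxi : ∀ x : E n, ‖(x i : ℂ)‖ ≤ 1 + ‖x‖ := by
    intro x
    rw [Complex.norm_real]
    linarith [PiLp.norm_apply_le x i, Real.norm_eq_abs (x i)]
  have hWeq : ∀ t : ℝ, (fun x : E n => 2 * inner ℝ
        ((x i : ℂ) * ψ t x + 2 * I * (t : ℂ) * pd (ψ t) i x) (W ψ i t x))
      = fun x => 2 * L (U i t (S hψ hS t) x) (Lap (U i t (S hψ hS t)) x) := by
    intro t; ext x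
    rw [L_apply, ← W_eq hψ hS heq, U_apply]
  have key := hasDerivAt_integral_of_dominated_loc_of_deriv_le (μ := (volume : Measure (E n)))
    (F := fun t x => ‖(x i : ℂ) * ψ t x + 2 * I * (t : ℂ) * pd (ψ t) i x‖ ^ 2)
    (F' := fun t x => 2 * inner ℝ
        ((x i : ℂ) * ψ t x + 2 * I * (t : ℂ) * pd (ψ t) i x) (W ψ i t x))
    (bound := fun x => 2 * ((A + 2 * T * B) * (C + (2 * D + 2 * T * F))) *
      (1 + ‖x‖) ^ (-((n + 1 : ℕ) : ℝ)))
    hs ?_ ?_ ?_ ?_ ?_ ?_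
  · have h := key.2
    rw [hWeq t₀, MeasureTheory.integral_const_mul, int_Lap, mul_zero] at h
    exact h
  · refine Filter.Eventually.of_forall fun t => ?_
    rw [hUeq t]
    exact ((U i t (S hψ hS t)).continuous.norm.pow 2).aestronglyMeasurable
  · rw [hUeq t₀]
    exact (memLp_two_iff_integrable_sq_norm
      (U i t₀ (S hψ hS t₀)).continuous.aestronglyMeasurable).1
      ((U i t₀ (S hψ hS t₀)).memLp 2)
  · rw [hWeq t₀]
    exact ((SchwartzMap.pairing L (U i t₀ (S hψ hS t₀))
      (Lap (U i t₀ (S hψ hS t₀)))).integrable.const_mul 2).aestronglyMeasurable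
  · refine Filter.Eventually.of_forall fun x t ht => ?_
    have ht' : |t| ≤ T := abs_le.2 ht
    have hu : ‖(x i : ℂ) * ψ t x + 2 * I * (t : ℂ) * pd (ψ t) i x‖ ≤ A + 2 * T * B := by
      have a1 := hA t ht x
      have a2 := hB t ht x
      simp only [pow_one, pow_zero, one_mul] at a1 a2
      calc _ ≤ ‖(x i : ℂ)‖ * ‖ψ t x‖ + 2 * |t| * ‖pd (ψ t) i x‖ := by
            refine (norm_add_le _ _).trans (le_of_eq ?_)
            simp
        _ ≤ (1 + ‖x‖) * ‖ψ t x‖ + 2 * T * B := by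
            gcongr
            exact hxi x
        _ ≤ _ := by gcongr
    have hw : (1 + ‖x‖) ^ (n + 1) * ‖W ψ i t x‖ ≤ C + (2 * D + 2 * T * F) := by
      have a1 := hC t ht x
      have a2 := hD t ht x
      have a3 := hF t ht x
      have a4 : ‖W ψ i t x‖ ≤ (1 + ‖x‖) * ‖tderiv ψ t x‖ +
          (2 * ‖pd (ψ t) i x‖ + 2 * T * ‖pd (tderiv ψ t) i x‖) := by
        calc _ ≤ ‖(x i : ℂ)‖ * ‖tderiv ψ t x‖ +
              (2 * ‖pd (ψ t) i x‖ + 2 * |t| * ‖pd (tderiv ψ t) i x‖) := by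
              refine (norm_add_le _ _).trans ?_
              refine add_le_add (le_of_eq (by simp)) ?_
              refine (norm_add_le _ _).trans (le_of_eq ?_)
              simp
          _ ≤ _ := by
              gcongr
              exact hxi x
      calc _ ≤ (1 + ‖x‖) ^ (n + 1) * ((1 + ‖x‖) * ‖tderiv ψ t x‖ +
          (2 * ‖pd (ψ t) i x‖ + 2 * T * ‖pd (tderiv ψ t) i x‖)) := by gcongr
        _ = (1 + ‖x‖) ^ (n + 2) * ‖tderiv ψ t x‖ +
          (2 * ((1 + ‖x‖) ^ (n + 1) * ‖pd (ψ t) i x‖) +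
            2 * T * ((1 + ‖x‖) ^ (n + 1) * ‖pd (tderiv ψ t) i x‖)) := by ring
        _ ≤ _ := by gcongr
    have hpos : 0 < (1 + ‖x‖) ^ (n + 1) := by positivity
    have hw' : ‖W ψ i t x‖ ≤ (C + (2 * D + 2 * T * F)) * (1 + ‖x‖) ^ (-((n + 1 : ℕ) : ℝ)) := by
      rw [Real.rpow_neg (by positivity), Real.rpow_natCast, ← div_eq_mul_inv, le_div_iff₀ hpos]
      linarith
    rw [norm_mul, Real.norm_two, mul_assoc (2 : ℝ), mul_assoc (A + 2 * T * B)]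
    refine mul_le_mul_of_nonneg_left ?_ (zero_le_two (α := ℝ))
    refine (norm_inner_le_norm _ _).trans ?_
    exact mul_le_mul hu hw' (norm_nonneg _) (by positivity)
  · refine (integrable_one_add_norm ?_).const_mul _
    simp
  · refine Filter.Eventually.of_forall fun x t _ => ?_
    exact (u_has hψ i t x).norm_sq

end

end CF

/-- For a solution of the free Schrödinger equation `i∂ₜψ = −Δψ` with Schwartz
data (seminorms locally bounded in time), the conformal factor
`t ↦ ∫ ‖xψ(t,x) + 2it∇ₓψ(t,x)‖² dx` is constant: `D_{H₀}|x−2pt|² = 0`. -/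
theorem conformal_factor_constant_free {n : ℕ} (hn : 1 ≤ n)
    (ψ : ℝ → EuclideanSpace ℝ (Fin n) → ℂ)
    (hψ : ContDiff ℝ (⊤ : ℕ∞) (fun p : ℝ × EuclideanSpace ℝ (Fin n) => ψ p.1 p.2))
    (hS : LocUnifSchwartz ψ)
    (hS' : LocUnifSchwartz (fun t => tderiv ψ t))
    (heq : ∀ t x, Complex.I * tderiv ψ t x = -lap (ψ t) x) :
    ∀ t₁ t₂ : ℝ, conformalFactor ψ t₁ = conformalFactor ψ t₂ := by
  have hc : ∀ t, conformalFactor ψ t = ∑ i, ∫ x : EuclideanSpace ℝ (Fin n),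
      ‖(x i : ℂ) * ψ t x + 2 * Complex.I * (t : ℂ) * pd (ψ t) i x‖ ^ 2 := by
    intro t
    rw [conformalFactor, MeasureTheory.integral_finsetSum]
    intro i _
    have := (memLp_two_iff_integrable_sq_norm
      (CF.U i t (CF.S hψ hS t)).continuous.aestronglyMeasurable).1
      ((CF.U i t (CF.S hψ hS t)).memLp 2)
    simpa only [CF.U_apply] using this
  have hd : ∀ t, HasDerivAt (conformalFactor ψ) 0 t := by
    intro t
    have h := HasDerivAt.fun_sum (u := Finset.univ)
      fun i _ => CF.main hψ hS hS' heq i t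
    rw [funext hc]
    simpa using h
  exact is_const_of_deriv_eq_zero (fun t => (hd t).differentiableAt) fun t => (hd t).deriv

end
end

section
/- Let n ≥ 1, let V : ℝⁿ → ℝ be smooth with V and all its derivatives bounded, and let ψ : ℝ × ℝⁿ → ℂ be smooth such that for each t the functions ψ(t,·) and ∂ₜψ(t,·) are Schwartz, with Schwartz seminorms locally bounded in t, and ψ satisfies i∂ₜψ(t,x) = −Δψ(t,x) + V(x)ψ(t,x) on ℝ × ℝⁿ. Define a(t) := Re ∫_{ℝⁿ} conj(ψ(t,x)) · (−i)(x·∇ₓψ(t,x) + (n/2)ψ(t,x)) dx. Then for every t, a is differentiable at t with a'(t) = 2∫_{ℝⁿ} ‖∇ₓψ(t,x)‖²_{ℂⁿ} dx − ∫_{ℝⁿ} (x·∇V(x)) |ψ(t,x)|² dx. -/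
open MeasureTheory Complex

noncomputable section

section Helpers

open scoped SchwartzMap LineDeriv

variable {n : ℕ}

/-- `f` is (the underlying function of) a Schwartz function. -/
def IsS (f : EuclideanSpace ℝ (Fin n) → ℂ) : Prop :=
  ∃ s : 𝓢(EuclideanSpace ℝ (Fin n), ℂ), ⇑s = f

/-- The operator `x·∇ + n/2`. -/
def dil (f : EuclideanSpace ℝ (Fin n) → ℂ) (x : EuclideanSpace ℝ (Fin n)) : ℂ :=
  (∑ i, (x i : ℂ) * pd f i x) + (n / 2 : ℂ) * f x

lemma two_le_smooth : (2 : WithTop ℕ∞) ≤ ((⊤ : ℕ∞) : WithTop ℕ∞) := by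
  exact WithTop.coe_le_coe.2 (le_top : (2 : ℕ∞) ≤ ⊤)

lemma IsS.integrable {f : EuclideanSpace ℝ (Fin n) → ℂ} (hf : IsS f) : Integrable f := by
  obtain ⟨s, rfl⟩ := hf
  exact s.integrable

lemma IsS.contDiff {f : EuclideanSpace ℝ (Fin n) → ℂ} (hf : IsS f) :
    ContDiff ℝ (⊤ : ℕ∞) f := by
  obtain ⟨s, rfl⟩ := hf
  exact s.smooth ⊤

lemma IsS.diff {f : EuclideanSpace ℝ (Fin n) → ℂ} (hf : IsS f) (x) :
    DifferentiableAt ℝ f x := by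
  obtain ⟨s, rfl⟩ := hf
  exact s.differentiableAt

lemma IsS.add {f g : EuclideanSpace ℝ (Fin n) → ℂ} (hf : IsS f) (hg : IsS g) :
    IsS (fun x => f x + g x) := by
  obtain ⟨s, rfl⟩ := hf
  obtain ⟨r, rfl⟩ := hg
  exact ⟨s + r, rfl⟩

lemma IsS.sum {ι : Type*} (t : Finset ι) {f : ι → EuclideanSpace ℝ (Fin n) → ℂ}
    (hf : ∀ i, IsS (f i)) : IsS (fun x => ∑ i ∈ t, f i x) := by
  choose s hs using hf
  refine ⟨∑ i ∈ t, s i, ?_⟩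
  funext x
  simp [← hs]

lemma IsS.tmul {g f : EuclideanSpace ℝ (Fin n) → ℂ} (hg : g.HasTemperateGrowth) (hf : IsS f) :
    IsS (fun x => g x * f x) := by
  obtain ⟨s, rfl⟩ := hf
  exact ⟨SchwartzMap.smulLeftCLM ℂ g s, by rw [SchwartzMap.smulLeftCLM_apply hg]; rfl⟩

lemma IsS.mul {g f : EuclideanSpace ℝ (Fin n) → ℂ} (hg : IsS g) (hf : IsS f) :
    IsS (fun x => g x * f x) := by
  obtain ⟨s, rfl⟩ := hg
  exact hf.tmul s.hasTemperateGrowth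

lemma IsS.const_mul {f : EuclideanSpace ℝ (Fin n) → ℂ} (c : ℂ) (hf : IsS f) :
    IsS (fun x => c * f x) := hf.tmul (g := fun _ => c) (by fun_prop)

lemma temp_coord (i : Fin n) :
    (fun x : EuclideanSpace ℝ (Fin n) => (x i : ℂ)).HasTemperateGrowth :=
  (Complex.ofRealCLM ∘L (EuclideanSpace.proj i :
    EuclideanSpace ℝ (Fin n) →L[ℝ] ℝ)).hasTemperateGrowth

lemma IsS.coord {f : EuclideanSpace ℝ (Fin n) → ℂ} (i : Fin n) (hf : IsS f) :
    IsS (fun x => (x i : ℂ) * f x) := hf.tmul (temp_coord i)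

lemma IsS.conj {f : EuclideanSpace ℝ (Fin n) → ℂ} (hf : IsS f) :
    IsS (fun x => (starRingEnd ℂ) (f x)) := by
  obtain ⟨s, rfl⟩ := hf
  exact ⟨s.postcompCLM (𝕜 := ℝ) (Complex.conjCLE : ℂ →L[ℝ] ℂ), rfl⟩

lemma IsS.pd {f : EuclideanSpace ℝ (Fin n) → ℂ} (hf : IsS f) (i : Fin n) :
    IsS (pd f i) := by
  obtain ⟨s, rfl⟩ := hf
  exact ⟨∂_{(EuclideanSpace.single i 1 : EuclideanSpace ℝ (Fin n))} s, rfl⟩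

lemma IsS.dil {f : EuclideanSpace ℝ (Fin n) → ℂ} (hf : IsS f) : IsS (dil f) :=
  (IsS.sum _ fun i => (hf.pd i).coord i).add (hf.const_mul _)

lemma pd_conj {f : EuclideanSpace ℝ (Fin n) → ℂ} (hf : IsS f) (i : Fin n) (x) :
    pd (fun y => (starRingEnd ℂ) (f y)) i x = (starRingEnd ℂ) (pd f i x) := by
  have h := (Complex.conjCLE : ℂ →L[ℝ] ℂ).hasFDerivAt.comp x (hf.diff x).hasFDerivAt
  have h2 : fderiv ℝ (fun y => (starRingEnd ℂ) (f y)) x = _ := h.fderiv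
  simp [pd, h2]

lemma dil_conj {f : EuclideanSpace ℝ (Fin n) → ℂ} (hf : IsS f) (x) :
    dil (fun y => (starRingEnd ℂ) (f y)) x = (starRingEnd ℂ) (dil f x) := by
  have h2 : (starRingEnd ℂ) (2 : ℂ) = 2 := Complex.conj_ofNat 2
  simp [dil, pd_conj hf, h2]

lemma pd_mul {f g : EuclideanSpace ℝ (Fin n) → ℂ} {x : EuclideanSpace ℝ (Fin n)}
    (hf : DifferentiableAt ℝ f x) (hg : DifferentiableAt ℝ g x) (i : Fin n) :
    pd (fun y => f y * g y) i x = pd f i x * g x + f x * pd g i x := by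
  simp only [pd]
  rw [fderiv_fun_mul hf hg]
  simp
  ring

lemma pd_coord (i j : Fin n) (x : EuclideanSpace ℝ (Fin n)) :
    pd (fun y => (y i : ℂ)) j x = if i = j then 1 else 0 := by
  have h : fderiv ℝ (fun y : EuclideanSpace ℝ (Fin n) => (y i : ℂ)) x = _ :=
    (Complex.ofRealCLM ∘L (EuclideanSpace.proj i :
    EuclideanSpace ℝ (Fin n) →L[ℝ] ℝ)).hasFDerivAt.fderiv
  simp only [pd, h]
  simp
  split_ifs <;> simp

lemma pd_comm {f : EuclideanSpace ℝ (Fin n) → ℂ} (hf : IsS f) (i j : Fin n) (x) :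
    pd (pd f i) j x = pd (pd f j) i x := by
  have hc := hf.contDiff
  have hd : DifferentiableAt ℝ (fderiv ℝ f) x :=
    (hc.fderiv_right (m := 1) (by norm_cast)).differentiable (by norm_num) x
  have key : ∀ i j : Fin n, pd (pd f i) j x =
      fderiv ℝ (fderiv ℝ f) x (EuclideanSpace.single j 1) (EuclideanSpace.single i 1) := by
    intro i j
    have h : fderiv ℝ (fun y => fderiv ℝ f y (EuclideanSpace.single i 1)) x = _ :=
      (hd.hasFDerivAt.clm_apply (hasFDerivAt_const _ x)).fderiv
    change fderiv ℝ (fun y => fderiv ℝ f y (EuclideanSpace.single i 1)) x _ = _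
    rw [h]; simp
  rw [key, key]
  have hs : IsSymmSndFDerivAt ℝ f x :=
    hc.contDiffAt.isSymmSndFDerivAt (by simpa using two_le_smooth)
  exact hs _ _

lemma pd_dil {f : EuclideanSpace ℝ (Fin n) → ℂ} (hf : IsS f) (j : Fin n) (x) :
    pd (dil f) j x = dil (pd f j) x + pd f j x := by
  have hx : ∀ i, DifferentiableAt ℝ (fun y : EuclideanSpace ℝ (Fin n) => (y i : ℂ)) x :=
    fun i => (temp_coord i).1.differentiable (by simp) x
  have h1 : pd (dil f) j x =
      (∑ i, pd (fun y => (y i : ℂ) * pd f i y) j x) + pd (fun y => (n / 2 : ℂ) * f y) j x := by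
    have : fderiv ℝ (dil f) x = _ := fderiv_fun_add
      (f := fun x => ∑ i, (x i : ℂ) * pd f i x) (g := fun x => (n / 2 : ℂ) * f x)
      ((IsS.sum _ fun i => (hf.pd i).coord i).diff x) ((hf.const_mul _).diff x)
    change fderiv ℝ (dil f) x _ = _
    rw [this, fderiv_fun_sum fun i _ => ((hf.pd i).coord i).diff x]
    rw [add_apply, sum_apply]
    rfl
  rw [h1, pd_mul (by fun_prop) (hf.diff x)]
  simp_rw [pd_mul (hx _) ((hf.pd _).diff x), pd_coord, pd_comm hf _ j]
  have : pd (fun _ : EuclideanSpace ℝ (Fin n) => (n / 2 : ℂ)) j x = 0 := by simp [pd]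
  rw [this]
  simp only [dil, Finset.sum_add_distrib]
  simp
  ring

lemma ibp {u v : EuclideanSpace ℝ (Fin n) → ℂ} (hu : IsS u) (hv : IsS v) (j : Fin n) :
    ∫ x, u x * pd v j x = - ∫ x, pd u j x * v x :=
  integral_mul_fderiv_eq_neg_fderiv_mul_of_integrable
    ((hu.pd j).mul hv).integrable (hu.mul (hv.pd j)).integrable (hu.mul hv).integrable
    (fun x _ => hu.diff x) (fun x _ => hv.diff x)

lemma dil_skew {u v : EuclideanSpace ℝ (Fin n) → ℂ} (hu : IsS u) (hv : IsS v) :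
    ∫ x, u x * dil v x = - ∫ x, dil u x * v x := by
  have hx : ∀ i x, DifferentiableAt ℝ (fun y : EuclideanSpace ℝ (Fin n) => (y i : ℂ)) x :=
    fun i x => (temp_coord i).1.differentiable (by simp) x
  have key : ∀ i, (∫ x : EuclideanSpace ℝ (Fin n), (x i : ℂ) * (u x * pd v i x)) =
      - (∫ x, u x * v x) - ∫ x : EuclideanSpace ℝ (Fin n), (x i : ℂ) * (pd u i x * v x) := by
    intro i
    have h := ibp (hu.coord i) hv i
    simp_rw [pd_mul (hx i _) (hu.diff _), pd_coord] at h
    rw [← neg_add', ← integral_add (hu.mul hv).integrable (((hu.pd i).mul hv).coord i).integrable]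
    simp only [if_true, one_mul, add_mul, mul_assoc] at h
    exact h
  have e1 : ∀ x, u x * dil v x =
      (∑ i, (x i : ℂ) * (u x * pd v i x)) + (n / 2 : ℂ) * (u x * v x) := by
    intro x; simp only [dil, mul_add, Finset.mul_sum]
    congr 1
    · exact Finset.sum_congr rfl fun i _ => by ring
    · ring
  have e2 : ∀ x, dil u x * v x =
      (∑ i, (x i : ℂ) * (pd u i x * v x)) + (n / 2 : ℂ) * (u x * v x) := by
    intro x; simp only [dil, add_mul, Finset.sum_mul]
    congr 1
    · exact Finset.sum_congr rfl fun i _ => by ring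
    · ring
  simp_rw [e1, e2]
  rw [integral_add (IsS.sum _ fun i => (hu.mul (hv.pd i)).coord i).integrable
      ((hu.mul hv).const_mul _).integrable,
    integral_add (IsS.sum _ fun i => ((hu.pd i).mul hv).coord i).integrable
      ((hu.mul hv).const_mul _).integrable,
    integral_finsetSum _ fun i _ => ((hu.mul (hv.pd i)).coord i).integrable,
    integral_finsetSum _ fun i _ => (((hu.pd i).mul hv).coord i).integrable,
    integral_const_mul]
  simp_rw [key]
  simp only [Finset.sum_sub_distrib, Finset.sum_const, Finset.card_univ, Fintype.card_fin,
    nsmul_eq_mul]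
  ring

lemma IsS.lap {f : EuclideanSpace ℝ (Fin n) → ℂ} (hf : IsS f) : IsS (lap f) :=
  IsS.sum _ fun i => (hf.pd i).pd i

/-- Kinetic part, for a pair of functions. -/
lemma kinetic {u f : EuclideanSpace ℝ (Fin n) → ℂ} (hu : IsS u) (hf : IsS f) :
    (∫ x, lap u x * dil f x) + (∫ x, dil u x * lap f x) =
      - 2 * ∑ i, ∫ x, pd u i x * pd f i x := by
  simp only [lap, Finset.sum_mul, Finset.mul_sum]
  rw [integral_finsetSum _ fun i _ => (((hu.pd i).pd i).mul hf.dil).integrable,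
    integral_finsetSum _ fun i _ => (hu.dil.mul ((hf.pd i).pd i)).integrable,
    ← Finset.sum_add_distrib]
  refine Finset.sum_congr rfl fun i _ => ?_
  have h1 := ibp (hu.pd i) hf.dil i
  have h2 := ibp hu.dil (hf.pd i) i
  simp_rw [pd_dil hf, mul_add] at h1
  simp_rw [pd_dil hu, add_mul] at h2
  rw [integral_add ((hu.pd i).mul (hf.pd i).dil).integrable
    ((hu.pd i).mul (hf.pd i)).integrable, dil_skew (hu.pd i) (hf.pd i)] at h1
  rw [integral_add ((hu.pd i).dil.mul (hf.pd i)).integrable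
    ((hu.pd i).mul (hf.pd i)).integrable] at h2
  change (∫ x, pd (pd u i) i x * dil f x) + (∫ x, dil u x * pd (pd f i) i x) = _
  rw [h2]
  linear_combination h1

/-- Potential part, for a pair of functions. -/
lemma potential {u f : EuclideanSpace ℝ (Fin n) → ℂ} (hu : IsS u) (hf : IsS f)
    {V : EuclideanSpace ℝ (Fin n) → ℝ} (hV : V.HasTemperateGrowth) :
    (∫ x, (V x : ℂ) * (u x * dil f x)) + (∫ x, (V x : ℂ) * (dil u x * f x)) =
      - ∫ x, (xdotGrad V x : ℂ) * (u x * f x) := by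
  have hVc : (fun x => (V x : ℂ)).HasTemperateGrowth := by fun_prop
  have h := dil_skew (hu.tmul hVc) hf
  have hd : ∀ x, DifferentiableAt ℝ V x := hV.1.differentiable (by simp)
  have hdc : ∀ x, DifferentiableAt ℝ (fun x => (V x : ℂ)) x := hVc.1.differentiable (by simp)
  have hpV : ∀ i x, pd (fun x => (V x : ℂ)) i x =
      (fderiv ℝ V x (EuclideanSpace.single i 1) : ℂ) := by
    intro i x
    have h2 : fderiv ℝ (fun y => (V y : ℂ)) x = _ :=
      (Complex.ofRealCLM.hasFDerivAt.comp x (hd x).hasFDerivAt).fderiv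
    simp [pd, h2]
  have e : ∀ x, dil (fun x => (V x : ℂ) * u x) x * f x =
      (V x : ℂ) * (dil u x * f x) + (xdotGrad V x : ℂ) * (u x * f x) := by
    intro x
    simp only [dil, pd_mul (hdc x) (hu.diff x), hpV, xdotGrad]
    push_cast
    simp only [mul_add, Finset.sum_add_distrib, add_mul, Finset.mul_sum, Finset.sum_mul]
    have a1 : ∀ i, (x i : ℂ) * ((V x : ℂ) * pd u i x) * f x
      = (V x : ℂ) * ((x i : ℂ) * pd u i x * f x) := fun i => by ring
    have a2 : ∀ i, (x i : ℂ) * ((fderiv ℝ V x (EuclideanSpace.single i 1) : ℂ) * u x) * f x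
      = (x i : ℂ) * (fderiv ℝ V x (EuclideanSpace.single i 1) : ℂ) * (u x * f x) :=
        fun i => by ring
    simp only [a1, a2]
    ring
  have hi1 : Integrable fun x => (V x : ℂ) * (dil u x * f x) :=
    ((hu.dil.mul hf).tmul hVc).integrable
  have hi2 : Integrable fun x => (xdotGrad V x : ℂ) * (u x * f x) := by
    have h0 := (((hu.tmul hVc).dil.mul hf)).integrable.sub hi1
    refine h0.congr (Filter.Eventually.of_forall fun x => ?_)
    simp [e]
  simp_rw [e] at h
  rw [integral_add hi1 hi2] at h
  simp_rw [mul_assoc] at h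
  rw [h]; ring


/-- Rapid decay, locally uniformly in time. -/
def UD (u : ℝ → EuclideanSpace ℝ (Fin n) → ℂ) : Prop :=
  ∀ (k : ℕ) (T : ℝ), ∃ C : ℝ, ∀ t ∈ Set.Icc (-T) T, ∀ x, ‖x‖ ^ k * ‖u t x‖ ≤ C

lemma LocUnifSchwartz.ud {u : ℝ → EuclideanSpace ℝ (Fin n) → ℂ} (h : LocUnifSchwartz u) :
    UD u := by
  intro k T
  obtain ⟨C, hC⟩ := h k 0 T
  refine ⟨C, fun t ht x => ?_⟩
  simpa using hC t ht x

lemma LocUnifSchwartz.ud_pd {u : ℝ → EuclideanSpace ℝ (Fin n) → ℂ} (h : LocUnifSchwartz u)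
    (i : Fin n) : UD (fun t => pd (u t) i) := by
  intro k T
  obtain ⟨C, hC⟩ := h k 1 T
  refine ⟨C, fun t ht x => le_trans ?_ (hC t ht x)⟩
  gcongr
  rw [norm_iteratedFDeriv_one]
  refine (ContinuousLinearMap.le_opNorm _ _).trans ?_
  simp

lemma UD.add {u v : ℝ → EuclideanSpace ℝ (Fin n) → ℂ} (hu : UD u) (hv : UD v) :
    UD (fun t x => u t x + v t x) := by
  intro k T
  obtain ⟨C, hC⟩ := hu k T
  obtain ⟨D, hD⟩ := hv k T
  refine ⟨C + D, fun t ht x => ?_⟩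
  calc ‖x‖ ^ k * ‖u t x + v t x‖ ≤ ‖x‖ ^ k * (‖u t x‖ + ‖v t x‖) := by
        gcongr; exact norm_add_le _ _
    _ ≤ C + D := by rw [mul_add]; exact add_le_add (hC t ht x) (hD t ht x)

lemma UD.mul {u v : ℝ → EuclideanSpace ℝ (Fin n) → ℂ} (hu : UD u) (hv : UD v) :
    UD (fun t x => u t x * v t x) := by
  intro k T
  obtain ⟨C, hC⟩ := hu k T
  obtain ⟨D, hD⟩ := hv 0 T
  refine ⟨C * D, fun t ht x => ?_⟩
  have h1 := hC t ht x
  have h2 := hD t ht x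
  rw [pow_zero, one_mul] at h2
  rw [norm_mul, ← mul_assoc]
  exact mul_le_mul h1 h2 (norm_nonneg _) (le_trans (by positivity) h1)

lemma UD.const_mul {u : ℝ → EuclideanSpace ℝ (Fin n) → ℂ} (c : ℂ) (hu : UD u) :
    UD (fun t x => c * u t x) := by
  intro k T
  obtain ⟨C, hC⟩ := hu k T
  refine ⟨‖c‖ * C, fun t ht x => ?_⟩
  rw [norm_mul, mul_left_comm]
  gcongr
  exact hC t ht x

lemma UD.conj {u : ℝ → EuclideanSpace ℝ (Fin n) → ℂ} (hu : UD u) :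
    UD (fun t x => (starRingEnd ℂ) (u t x)) := by
  intro k T
  obtain ⟨C, hC⟩ := hu k T
  exact ⟨C, fun t ht x => by simpa using hC t ht x⟩

lemma UD.coord {u : ℝ → EuclideanSpace ℝ (Fin n) → ℂ} (i : Fin n) (hu : UD u) :
    UD (fun t x => (x i : ℂ) * u t x) := by
  intro k T
  obtain ⟨C, hC⟩ := hu (k + 1) T
  refine ⟨C, fun t ht x => le_trans ?_ (hC t ht x)⟩
  rw [norm_mul, pow_succ, mul_assoc, Complex.norm_real]
  gcongr
  exact PiLp.norm_apply_le x i

lemma UD.sum {ι : Type*} (s : Finset ι) {u : ι → ℝ → EuclideanSpace ℝ (Fin n) → ℂ}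
    (hu : ∀ i, UD (u i)) : UD (fun t x => ∑ i ∈ s, u i t x) := by
  intro k T
  choose C hC using fun i => hu i k T
  refine ⟨∑ i ∈ s, C i, fun t ht x => ?_⟩
  calc ‖x‖ ^ k * ‖∑ i ∈ s, u i t x‖ ≤ ‖x‖ ^ k * ∑ i ∈ s, ‖u i t x‖ := by
        gcongr; exact norm_sum_le _ _
    _ ≤ ∑ i ∈ s, C i := by
        rw [Finset.mul_sum]; exact Finset.sum_le_sum fun i _ => hC i t ht x

lemma LocUnifSchwartz.ud_dil {u : ℝ → EuclideanSpace ℝ (Fin n) → ℂ} (h : LocUnifSchwartz u) :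
    UD (fun t => dil (u t)) :=
  (UD.sum _ fun i => (h.ud_pd i).coord i).add (h.ud.const_mul _)

lemma UD.bound {u : ℝ → EuclideanSpace ℝ (Fin n) → ℂ} (hu : UD u) (T : ℝ) :
    ∃ b : EuclideanSpace ℝ (Fin n) → ℝ, Integrable b ∧
      ∀ t ∈ Set.Icc (-T) T, ∀ x, ‖u t x‖ ≤ b x := by
  let l := (volume : Measure (EuclideanSpace ℝ (Fin n))).integrablePower
  obtain ⟨C, hC⟩ := hu 0 T
  obtain ⟨D, hD⟩ := hu (0 + l) T
  refine ⟨fun x => 2 ^ l * (C + D) * (1 + ‖x‖) ^ (-(l : ℝ)),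
    (Measure.integrable_pow_neg_integrablePower _).const_mul _, fun t ht x => ?_⟩
  have := pow_mul_le_of_le_of_pow_mul_le (norm_nonneg x) (norm_nonneg (u t x))
    (k := 0) (l := l) (by simpa using hC t ht x) (hD t ht x)
  simpa using this

section joint

variable {ψ : ℝ → EuclideanSpace ℝ (Fin n) → ℂ}

lemma hasFDerivAt_slice
    (hψ : ContDiff ℝ (⊤ : ℕ∞) (fun p : ℝ × EuclideanSpace ℝ (Fin n) => ψ p.1 p.2)) (t : ℝ) (x) :
    HasFDerivAt (ψ t) (fderiv ℝ (fun p : ℝ × EuclideanSpace ℝ (Fin n) => ψ p.1 p.2) (t, x) ∘L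
      ContinuousLinearMap.inr ℝ ℝ _) x := by
  have h := (hψ.differentiable (by simp) (t, x)).hasFDerivAt
  exact HasFDerivAt.comp x (f := fun y => (t, y)) h (hasFDerivAt_prodMk_right t x)

lemma hasDerivAt_time
    (hψ : ContDiff ℝ (⊤ : ℕ∞) (fun p : ℝ × EuclideanSpace ℝ (Fin n) => ψ p.1 p.2)) (t : ℝ) (x) :
    HasDerivAt (fun s => ψ s x)
      (fderiv ℝ (fun p : ℝ × EuclideanSpace ℝ (Fin n) => ψ p.1 p.2) (t, x) (1, 0)) t := by
  have h := (hψ.differentiable (by simp) (t, x)).hasFDerivAt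
  exact HasFDerivAt.comp_hasDerivAt t (f := fun s => (s, x)) h
    ((hasDerivAt_id t).prodMk (hasDerivAt_const t x))

lemma tderiv_eq
    (hψ : ContDiff ℝ (⊤ : ℕ∞) (fun p : ℝ × EuclideanSpace ℝ (Fin n) => ψ p.1 p.2)) (t : ℝ) (x) :
    tderiv ψ t x =
      fderiv ℝ (fun p : ℝ × EuclideanSpace ℝ (Fin n) => ψ p.1 p.2) (t, x) (1, 0) :=
  (hasDerivAt_time hψ t x).deriv

lemma contDiff_tderiv
    (hψ : ContDiff ℝ (⊤ : ℕ∞) (fun p : ℝ × EuclideanSpace ℝ (Fin n) => ψ p.1 p.2)) :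
    ContDiff ℝ (⊤ : ℕ∞) (fun p : ℝ × EuclideanSpace ℝ (Fin n) => tderiv ψ p.1 p.2) := by
  simp_rw [tderiv_eq hψ]
  exact (hψ.fderiv_right (m := (⊤ : ℕ∞)) (by norm_cast)).clm_apply contDiff_const

lemma isS_of
    (hψ : ContDiff ℝ (⊤ : ℕ∞) (fun p : ℝ × EuclideanSpace ℝ (Fin n) => ψ p.1 p.2))
    (hS : LocUnifSchwartz ψ) (t : ℝ) : IsS (ψ t) := by
  refine ⟨⟨ψ t, hψ.comp (contDiff_prodMk_right t), fun k m => ?_⟩, rfl⟩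
  obtain ⟨C, hC⟩ := hS k m |t|
  exact ⟨C, hC t ⟨neg_abs_le t, le_abs_self t⟩⟩

lemma hasDerivAt_pd
    (hψ : ContDiff ℝ (⊤ : ℕ∞) (fun p : ℝ × EuclideanSpace ℝ (Fin n) => ψ p.1 p.2))
    (i : Fin n) (t : ℝ) (x) :
    HasDerivAt (fun s => pd (ψ s) i x) (pd (tderiv ψ t) i x) t := by
  set G : ℝ × EuclideanSpace ℝ (Fin n) → ℂ := fun p => ψ p.1 p.2 with hG
  have hd : HasFDerivAt (fderiv ℝ G) (fderiv ℝ (fderiv ℝ G) (t, x)) (t, x) :=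
    ((hψ.fderiv_right (m := 1) (by norm_cast)).differentiable (by norm_num) _).hasFDerivAt
  have hs : IsSymmSndFDerivAt ℝ G (t, x) :=
    hψ.contDiffAt.isSymmSndFDerivAt (by simpa using two_le_smooth)
  have e1 : (fun s => pd (ψ s) i x) =
      fun s => fderiv ℝ G (s, x) (0, EuclideanSpace.single i 1) := by
    funext s
    rw [pd, (hasFDerivAt_slice hψ s x).fderiv]
    simp [hG]
  have e2 : tderiv ψ t = fun y => fderiv ℝ G (t, y) (1, 0) := by
    funext y; exact tderiv_eq hψ t y
  have h1 := (HasFDerivAt.comp_hasDerivAt t (f := fun s => (s, x)) hd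
    ((hasDerivAt_id t).prodMk (hasDerivAt_const t x))).clm_apply
      (hasDerivAt_const t ((0, EuclideanSpace.single i 1) : ℝ × EuclideanSpace ℝ (Fin n)))
  have h2 := (HasFDerivAt.comp x (f := fun y => (t, y)) hd
    (hasFDerivAt_prodMk_right t x)).clm_apply
      (hasFDerivAt_const ((1, 0) : ℝ × EuclideanSpace ℝ (Fin n)) x)
  have h2' : fderiv ℝ (fun y => fderiv ℝ G (t, y) (1, 0)) x = _ := h2.fderiv
  rw [e1, pd, e2, h2']
  refine h1.congr_deriv ?_
  simpa using hs _ _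

lemma hasDerivAt_dil
    (hψ : ContDiff ℝ (⊤ : ℕ∞) (fun p : ℝ × EuclideanSpace ℝ (Fin n) => ψ p.1 p.2))
    (t : ℝ) (x) :
    HasDerivAt (fun s => dil (ψ s) x) (dil (tderiv ψ t) x) t := by
  have h0 : HasDerivAt (fun s => ψ s x) (tderiv ψ t x) t := by
    rw [tderiv_eq hψ]; exact hasDerivAt_time hψ t x
  exact (HasDerivAt.fun_sum fun i _ => (hasDerivAt_pd hψ i t x).const_mul _).add (h0.const_mul _)

end joint

/-- Differentiation under the integral sign. -/
lemma deriv_integral {ψ : ℝ → EuclideanSpace ℝ (Fin n) → ℂ}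
    (hψ : ContDiff ℝ (⊤ : ℕ∞) (fun p : ℝ × EuclideanSpace ℝ (Fin n) => ψ p.1 p.2))
    (hS : LocUnifSchwartz ψ)
    (hS' : LocUnifSchwartz (fun t => tderiv ψ t)) (t : ℝ) :
    HasDerivAt (fun s => ∫ x, (starRingEnd ℂ) (ψ s x) * (-Complex.I * dil (ψ s) x))
      (∫ x, ((starRingEnd ℂ) (tderiv ψ t x) * (-Complex.I * dil (ψ t) x) +
        (starRingEnd ℂ) (ψ t x) * (-Complex.I * dil (tderiv ψ t) x))) t := by
  have hf := isS_of hψ hS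
  have hg := isS_of (contDiff_tderiv hψ) hS'
  have hUD : UD (fun t x => (starRingEnd ℂ) (tderiv ψ t x) * (-Complex.I * dil (ψ t) x) +
        (starRingEnd ℂ) (ψ t x) * (-Complex.I * dil (tderiv ψ t) x)) :=
    (hS'.ud.conj.mul (hS.ud_dil.const_mul _)).add (hS.ud.conj.mul (hS'.ud_dil.const_mul _))
  obtain ⟨b, hb, hb2⟩ := hUD.bound (|t| + 1)
  have hF : ∀ s, IsS fun x => (starRingEnd ℂ) (ψ s x) * (-Complex.I * dil (ψ s) x) :=
    fun s => (hf s).conj.mul ((hf s).dil.const_mul _)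
  have hF' : ∀ s, IsS fun x => (starRingEnd ℂ) (tderiv ψ s x) * (-Complex.I * dil (ψ s) x) +
        (starRingEnd ℂ) (ψ s x) * (-Complex.I * dil (tderiv ψ s) x) :=
    fun s => ((hg s).conj.mul ((hf s).dil.const_mul _)).add
      ((hf s).conj.mul ((hg s).dil.const_mul _))
  have hnh : Set.Icc (-(|t| + 1)) (|t| + 1) ∈ nhds t :=
    Icc_mem_nhds (by linarith [neg_abs_le t]) (by linarith [le_abs_self t])
  refine (hasDerivAt_integral_of_dominated_loc_of_deriv_le (bound := b) hnh
    (Filter.Eventually.of_forall fun s => (hF s).integrable.aestronglyMeasurable)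
    (hF t).integrable (hF' t).integrable.aestronglyMeasurable
    (Filter.Eventually.of_forall fun x s hs => hb2 s hs x) hb
    (Filter.Eventually.of_forall fun x s _ => ?_)).2
  have h0 : HasDerivAt (fun s => ψ s x) (tderiv ψ s x) s := by
    rw [tderiv_eq hψ]; exact hasDerivAt_time hψ s x
  have hc : HasDerivAt (fun s => (starRingEnd ℂ) (ψ s x)) ((starRingEnd ℂ) (tderiv ψ s x)) s :=
    (Complex.conjCLE : ℂ →L[ℝ] ℂ).hasFDerivAt.comp_hasDerivAt s h0
  exact hc.mul ((hasDerivAt_dil hψ s x).const_mul _)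

lemma lap_conj {f : EuclideanSpace ℝ (Fin n) → ℂ} (hf : IsS f) (x) :
    lap (fun y => (starRingEnd ℂ) (f y)) x = (starRingEnd ℂ) (lap f x) := by
  have : ∀ i, (fun y => pd (fun y => (starRingEnd ℂ) (f y)) i y) =
    fun y => (starRingEnd ℂ) (pd f i y) := fun i => by funext y; exact pd_conj hf i y
  simp only [lap, this, map_sum]
  exact Finset.sum_congr rfl fun i _ => pd_conj (hf.pd i) i x

/-- The commutator computation at fixed time. -/
lemma fixed_time {f g : EuclideanSpace ℝ (Fin n) → ℂ} (hf : IsS f) (hg : IsS g)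
    {V : EuclideanSpace ℝ (Fin n) → ℝ} (hV : V.HasTemperateGrowth)
    (heq : ∀ x, Complex.I * g x = -lap f x + (V x : ℂ) * f x) :
    ∫ x, ((starRingEnd ℂ) (g x) * (-Complex.I * dil f x) +
        (starRingEnd ℂ) (f x) * (-Complex.I * dil g x)) =
      ((2 * (∫ x, gradNormSq f x) - ∫ x, xdotGrad V x * ‖f x‖ ^ 2 : ℝ) : ℂ) := by
  have hVc : (fun x => (V x : ℂ)).HasTemperateGrowth := by fun_prop
  have hgx : ∀ x, g x = Complex.I * lap f x - Complex.I * ((V x : ℂ) * f x) := by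
    intro x
    linear_combination (-Complex.I) * heq x + g x * Complex.I_sq
  set u : EuclideanSpace ℝ (Fin n) → ℂ := fun y => (starRingEnd ℂ) (f y) with hu_def
  have hu : IsS u := hf.conj
  have hgc : ∀ x, (starRingEnd ℂ) (g x) =
      -Complex.I * lap u x + Complex.I * ((V x : ℂ) * u x) := by
    intro x
    rw [hgx, hu_def, lap_conj hf]
    simp
  have i1 := (hg.conj.mul (hf.dil.const_mul (-Complex.I))).integrable
  have i2 := (hu.mul (hg.dil.const_mul (-Complex.I))).integrable
  rw [integral_add i1 i2]
  have s2 : ∫ x, u x * (-Complex.I * dil g x) = ∫ x, Complex.I * (dil u x * g x) := by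
    have h := dil_skew hu hg
    simp_rw [mul_left_comm (u _)]
    rw [integral_const_mul, integral_const_mul, h]; ring
  rw [s2]
  have t1 : ∀ x, (starRingEnd ℂ) (g x) * (-Complex.I * dil f x) =
      -(lap u x * dil f x) + (V x : ℂ) * (u x * dil f x) := by
    intro x; rw [hgc]
    linear_combination (lap u x * dil f x - (V x : ℂ) * (u x * dil f x)) * Complex.I_sq
  have t2 : ∀ x, Complex.I * (dil u x * g x) =
      -(dil u x * lap f x) + (V x : ℂ) * (dil u x * f x) := by
    intro x; rw [hgx]
    linear_combination (dil u x * lap f x - (V x : ℂ) * (dil u x * f x)) * Complex.I_sq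
  simp_rw [t1, t2, neg_add_eq_sub]
  rw [integral_sub ((hu.mul hf.dil).tmul hVc).integrable (hu.lap.mul hf.dil).integrable,
    integral_sub ((hu.dil.mul hf).tmul hVc).integrable (hu.dil.mul hf.lap).integrable]
  have k1 := kinetic hu hf
  have k2 := potential hu hf hV
  have g1 : ((∫ x, gradNormSq f x : ℝ) : ℂ) = ∑ i, ∫ x, pd u i x * pd f i x := by
    rw [← integral_finsetSum _ fun i _ => ((hu.pd i).mul (hf.pd i)).integrable,
      ← integral_complex_ofReal]
    congr 1; funext x
    simp only [gradNormSq, hu_def, pd_conj hf]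
    push_cast
    exact Finset.sum_congr rfl fun i _ => (Complex.conj_mul' _).symm
  have g2 : ((∫ x, xdotGrad V x * ‖f x‖ ^ 2 : ℝ) : ℂ) =
      ∫ x, (xdotGrad V x : ℂ) * (u x * f x) := by
    rw [← integral_complex_ofReal]
    congr 1; funext x
    simp only [hu_def]
    rw [Complex.conj_mul']
    push_cast
    rfl
  rw [Complex.ofReal_sub, Complex.ofReal_mul, g1, g2]
  push_cast
  linear_combination k2 - k1

end Helpers

/-- The dilation (virial) identity: for a solution of `i∂ₜψ = −Δψ + Vψ`,
the expectation `a(t) = Re⟨ψ(t), Aψ(t)⟩` of the dilation operator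
`A = (1/2)(x·p + p·x)` satisfies
`a'(t) = 2∫‖∇ψ‖² − ∫ (x·∇V)|ψ|²`, i.e. `i[H,A] = −2Δ − x·∇V`. -/
theorem dilation_identity {n : ℕ} (hn : 1 ≤ n)
    (V : EuclideanSpace ℝ (Fin n) → ℝ)
    (hV : ContDiff ℝ (⊤ : ℕ∞) V)
    (hVbd : ∀ m : ℕ, ∃ C : ℝ, ∀ x, ‖iteratedFDeriv ℝ m V x‖ ≤ C)
    (ψ : ℝ → EuclideanSpace ℝ (Fin n) → ℂ)
    (hψ : ContDiff ℝ (⊤ : ℕ∞) (fun p : ℝ × EuclideanSpace ℝ (Fin n) => ψ p.1 p.2))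
    (hS : LocUnifSchwartz ψ)
    (hS' : LocUnifSchwartz (fun t => tderiv ψ t))
    (heq : ∀ t x, Complex.I * tderiv ψ t x = -lap (ψ t) x + (V x : ℂ) * ψ t x)
    (a : ℝ → ℝ)
    (ha : ∀ t, a t = (∫ x : EuclideanSpace ℝ (Fin n),
      (starRingEnd ℂ) (ψ t x) *
        (-Complex.I * ((∑ i, (x i : ℂ) * pd (ψ t) i x) + (n / 2 : ℂ) * ψ t x))).re) :
    ∀ t : ℝ, HasDerivAt a
      (2 * (∫ x : EuclideanSpace ℝ (Fin n), gradNormSq (ψ t) x)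
        - ∫ x : EuclideanSpace ℝ (Fin n), xdotGrad V x * ‖ψ t x‖ ^ 2) t := by
  intro t
  have hVt : V.HasTemperateGrowth :=
    ⟨hV, fun m => ⟨0, by simpa using hVbd m⟩⟩
  have h := deriv_integral hψ hS hS' t
  rw [fixed_time (isS_of hψ hS t) (isS_of (contDiff_tderiv hψ) hS' t) hVt (heq t)] at h
  have h2 := Complex.reCLM.hasFDerivAt.comp_hasDerivAt t h
  have e : a = Complex.reCLM ∘ fun s =>
      ∫ x, (starRingEnd ℂ) (ψ s x) * (-Complex.I * dil (ψ s) x) := by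
    funext s
    exact ha s
  rw [e]
  simpa only [Complex.reCLM_apply, Complex.ofReal_re] using h2

end
end
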